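/- arXiv:1804.04330 — 2 statements merged into one kernel-verified Lean document; each statement's English description precedes it below -/
import Mathlib

section
/- For N ≥ 2 colors: for each k ∈ Fin N let W^(k) = {x ∈ (Fin N)^n | x_i = c⁽¹⁾, x_{i+1} = c⁽ᵏ⁾} for a fixed interior site i. Then ∑_{x ∈ W^(1)} w(x) = exp(2/T)·∑_{x ∈ W^(k)} w(x) for every k ≠ 1, and consequently ∑_{x ∈ W^(1)} π(x) = 1/(N·(1 + (N-1)·exp(-2/T))) and ∑_{x ∈ W^(k)} π(x) = exp(-2/T)/(N·(1 + (N-1)·exp(-2/T))) for k ≠ 1. -/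
open Finset

/-- Unnormalized Gibbs weight of the 1-D Ising model with `N` colors on `n` sites:
`w(x) = exp((1/T) ∑_{k=1}^{n-1} (𝟙{x_k = x_{k+1}} - 𝟙{x_k ≠ x_{k+1}}))`. -/
noncomputable def isingW (N n : ℕ) (T : ℝ) (x : Fin n → Fin N) : ℝ :=
  Real.exp (1 / T * ∑ k : Fin (n - 1),
    (if x ⟨k.1, by have := k.2; omega⟩ = x ⟨k.1 + 1, by have := k.2; omega⟩
      then (1 : ℝ) else -1))

/-- Partition function of the 1-D Ising model. -/
noncomputable def isingZ (N n : ℕ) (T : ℝ) : ℝ :=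
  ∑ x : Fin n → Fin N, isingW N n T x

/-- Normalized Gibbs measure of the 1-D Ising model. -/
noncomputable def isingPi (N n : ℕ) (T : ℝ) (x : Fin n → Fin N) : ℝ :=
  isingW N n T x / isingZ N n T

/-- The contribution to the Gibbs weight of all bonds other than the one at site `i`. -/
noncomputable def offBondWeight (N n : ℕ) (T : ℝ) (i : Fin (n - 1)) (x : Fin n → Fin N) : ℝ :=
  Real.exp (1 / T * ∑ k ∈ univ.erase i,
    (if x ⟨k.1, by have := k.2; omega⟩ = x ⟨k.1 + 1, by have := k.2; omega⟩
      then (1 : ℝ) else -1))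

theorem isingW_eq_bond_mul_offBondWeight (N n : ℕ) (T : ℝ) (i : Fin (n - 1))
    (x : Fin n → Fin N) :
    isingW N n T x = Real.exp (1 / T *
      (if x ⟨i.1, by have := i.2; omega⟩ = x ⟨i.1 + 1, by have := i.2; omega⟩
        then (1 : ℝ) else -1)) * offBondWeight N n T i x := by
  rw [isingW, offBondWeight, ← Real.exp_add, ← mul_add, ← add_sum_erase _ _ (mem_univ i)]

/-- Permute the colors by `σ` at the sites up to `i` and by `τ` at the sites after `i`. -/
def recolor (N n i : ℕ) (σ τ : Equiv.Perm (Fin N)) : Equiv.Perm (Fin n → Fin N) :=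
  Equiv.piCongrRight fun j => if j.1 ≤ i then σ else τ

theorem recolor_apply (N n i : ℕ) (σ τ : Equiv.Perm (Fin N)) (x : Fin n → Fin N) (j : Fin n) :
    recolor N n i σ τ x j = if j.1 ≤ i then σ (x j) else τ (x j) := by
  simp only [recolor, Equiv.piCongrRight_apply, Pi.map_apply]
  split_ifs <;> rfl

theorem offBondWeight_recolor (N n : ℕ) (T : ℝ) (i : Fin (n - 1)) (σ τ : Equiv.Perm (Fin N))
    (x : Fin n → Fin N) :
    offBondWeight N n T i (recolor N n i σ τ x) = offBondWeight N n T i x := by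
  unfold offBondWeight
  congr 2
  refine sum_congr rfl fun k hk => ?_
  have hki : k.1 ≠ i.1 := fun h => (mem_erase.mp hk).1 (Fin.ext h)
  simp only [recolor_apply]
  rcases lt_or_gt_of_ne hki with h | h
  · rw [if_pos h.le, if_pos (Nat.succ_le_of_lt h)]
    simp only [σ.apply_eq_iff_eq]
  · rw [if_neg (not_le.mpr h), if_neg (not_le.mpr (Nat.lt_succ_of_lt h))]
    simp only [τ.apply_eq_iff_eq]

theorem sum_offBondWeight_eq (N n : ℕ) (T : ℝ) (i : Fin (n - 1)) (a b a' b' : Fin N) :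
    ∑ x ∈ univ.filter (fun x : Fin n → Fin N =>
        x ⟨i.1, by have := i.2; omega⟩ = a ∧ x ⟨i.1 + 1, by have := i.2; omega⟩ = b),
        offBondWeight N n T i x
      = ∑ x ∈ univ.filter (fun x : Fin n → Fin N =>
        x ⟨i.1, by have := i.2; omega⟩ = a' ∧ x ⟨i.1 + 1, by have := i.2; omega⟩ = b'),
        offBondWeight N n T i x := by
  refine sum_equiv (recolor N n i (Equiv.swap a a') (Equiv.swap b b')) (fun x => ?_)
    fun x _ => (offBondWeight_recolor N n T i _ _ x).symm
  simp only [mem_filter, mem_univ, true_and, recolor_apply, le_refl, if_true,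
    Nat.not_succ_le_self, if_false, Equiv.swap_apply_eq_iff, Equiv.swap_apply_right]

/-- The sums of the Gibbs weight with the colors at sites `i` and `i + 1` prescribed depend on
these colors only through the bond between them. -/
theorem exists_sum_isingW_eq (N n : ℕ) (T : ℝ) (i : Fin (n - 1)) (c : Fin N) :
    ∃ r : ℝ, 0 < r ∧ ∀ a b : Fin N,
      ∑ x ∈ univ.filter (fun x : Fin n → Fin N =>
        x ⟨i.1, by have := i.2; omega⟩ = a ∧ x ⟨i.1 + 1, by have := i.2; omega⟩ = b),
        isingW N n T x = (if a = b then Real.exp (1 / T) else Real.exp (-(1 / T))) * r := by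
  refine ⟨∑ x ∈ univ.filter (fun x : Fin n → Fin N =>
      x ⟨i.1, by have := i.2; omega⟩ = c ∧ x ⟨i.1 + 1, by have := i.2; omega⟩ = c),
      offBondWeight N n T i x, ?_, fun a b => ?_⟩
  · exact sum_pos (fun x _ => Real.exp_pos _) ⟨fun _ => c, by simp⟩
  · rw [← sum_offBondWeight_eq N n T i a b c c, mul_sum]
    refine sum_congr rfl fun x hx => ?_
    obtain ⟨ha, hb⟩ := (mem_filter.mp hx).2
    rw [isingW_eq_bond_mul_offBondWeight N n T i, ha, hb]
    split_ifs <;> simp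

theorem isingZ_eq (N n : ℕ) (T : ℝ) (i : Fin (n - 1)) (r : ℝ)
    (hr : ∀ a b : Fin N, ∑ x ∈ univ.filter (fun x : Fin n → Fin N =>
        x ⟨i.1, by have := i.2; omega⟩ = a ∧ x ⟨i.1 + 1, by have := i.2; omega⟩ = b),
        isingW N n T x = (if a = b then Real.exp (1 / T) else Real.exp (-(1 / T))) * r) :
    isingZ N n T =
      N * (Real.exp (1 / T) + ((N : ℝ) - 1) * Real.exp (-(1 / T))) * r := by
  have hrow (a : Fin N) : ∑ b, (if a = b then Real.exp (1 / T) else Real.exp (-(1 / T)))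
      = Real.exp (1 / T) + ((N : ℝ) - 1) * Real.exp (-(1 / T)) := by
    have hN : 1 ≤ N := a.pos
    rw [← add_sum_erase _ _ (mem_univ a), if_pos rfl,
      sum_congr rfl fun b hb => if_neg (ne_of_mem_erase hb).symm]
    simp [card_erase_of_mem, Nat.cast_sub hN]
  rw [isingZ, ← sum_fiberwise univ fun x : Fin n → Fin N =>
    (x ⟨i.1, by have := i.2; omega⟩, x ⟨i.1 + 1, by have := i.2; omega⟩)]
  simp only [Prod.ext_iff, Fintype.sum_prod_type, hr, ← sum_mul, hrow]
  rw [sum_const, card_univ, Fintype.card_fin, nsmul_eq_mul]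

/-- For the `N`-state 1-D Ising model with `W^(k) = {x | x_i = c⁽¹⁾, x_{i+1} = c⁽ᵏ⁾}`
for a fixed interior site `i` (colors enumerated by `Fin N`, `c⁽¹⁾ = c₁`):
`∑_{x ∈ W^(1)} w(x) = e^{2/T} ∑_{x ∈ W^(k)} w(x)` for every `k ≠ c₁`, and consequently
`∑_{x ∈ W^(1)} π(x) = 1/(N(1+(N-1)e^{-2/T}))` and
`∑_{x ∈ W^(k)} π(x) = e^{-2/T}/(N(1+(N-1)e^{-2/T}))` for `k ≠ c₁`. -/
theorem sum_W_N_state (N : ℕ) (hN : 2 ≤ N) (n : ℕ) (hn : 3 ≤ n) (T : ℝ) (hT : 0 < T)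
    (c₁ : Fin N) (i : ℕ) (hi1 : 1 ≤ i) (hi2 : i ≤ n - 2) :
    (∀ k : Fin N, k ≠ c₁ →
      (∑ x ∈ Finset.univ.filter (fun x : Fin n → Fin N =>
          x ⟨i, by omega⟩ = c₁ ∧ x ⟨i + 1, by omega⟩ = c₁), isingW N n T x)
        = Real.exp (2 / T) * ∑ x ∈ Finset.univ.filter (fun x : Fin n → Fin N =>
            x ⟨i, by omega⟩ = c₁ ∧ x ⟨i + 1, by omega⟩ = k), isingW N n T x) ∧
    (∑ x ∈ Finset.univ.filter (fun x : Fin n → Fin N =>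
        x ⟨i, by omega⟩ = c₁ ∧ x ⟨i + 1, by omega⟩ = c₁), isingPi N n T x)
      = 1 / ((N : ℝ) * (1 + ((N : ℝ) - 1) * Real.exp (-2 / T))) ∧
    (∀ k : Fin N, k ≠ c₁ →
      (∑ x ∈ Finset.univ.filter (fun x : Fin n → Fin N =>
          x ⟨i, by omega⟩ = c₁ ∧ x ⟨i + 1, by omega⟩ = k), isingPi N n T x)
        = Real.exp (-2 / T) / ((N : ℝ) * (1 + ((N : ℝ) - 1) * Real.exp (-2 / T)))) := by
  obtain ⟨r, hr0, hr⟩ := exists_sum_isingW_eq N n T ⟨i, by omega⟩ c₁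
  have hZ := isingZ_eq N n T ⟨i, by omega⟩ r hr
  have hN1 : (1 : ℝ) < N := by exact_mod_cast hN
  have hE := Real.exp_pos (1 / T)
  have hF := Real.exp_pos (-(1 / T))
  have h_sq : Real.exp (2 / T) = Real.exp (1 / T) * Real.exp (1 / T) := by
    rw [← Real.exp_add]; congr 1; ring
  have h_sq_neg : Real.exp (-2 / T) = Real.exp (-(1 / T)) * Real.exp (-(1 / T)) := by
    rw [← Real.exp_add]; congr 1; ring
  have h_inv : Real.exp (1 / T) * Real.exp (-(1 / T)) = 1 := by
    rw [← Real.exp_add, add_neg_cancel, Real.exp_zero]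
  have hden : 0 < 1 + ((N : ℝ) - 1) * Real.exp (-2 / T) :=
    add_pos one_pos (mul_pos (sub_pos.mpr hN1) (Real.exp_pos _))
  have hZ' : isingZ N n T =
      N * (1 + ((N : ℝ) - 1) * Real.exp (-2 / T)) * (Real.exp (1 / T) * r) := by
    rw [hZ, h_sq_neg]
    linear_combination
      -(N : ℝ) * r * ((N : ℝ) - 1) * Real.exp (-(1 / T)) * h_inv
  refine ⟨fun k hk => ?_, ?_, fun k hk => ?_⟩
  · rw [hr c₁ c₁, hr c₁ k, if_pos rfl, if_neg hk.symm, h_sq]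
    linear_combination -Real.exp (1 / T) * r * h_inv
  · simp only [isingPi]
    rw [← sum_div, hr c₁ c₁, if_pos rfl, hZ']
    field_simp
  · simp only [isingPi]
    have hF_eq : Real.exp (-(1 / T)) = Real.exp (-2 / T) * Real.exp (1 / T) := by
      rw [h_sq_neg]; linear_combination -Real.exp (-(1 / T)) * h_inv
    rw [← sum_div, hr c₁ k, if_neg hk.symm, hZ', hF_eq]
    field_simp
end

section
/- Let P be a reversible irreducible aperiodic Markov kernel on a finite state space χ with stationary distribution π of full support, and let β* be the maximum of the absolute values of all eigenvalues of P other than 1. Then for all x ∈ χ and k ∈ ℕ, (∑_{y ∈ χ} |P^k(x,y) - π(y)|)² ≤ ((1 - π(x))/π(x))·(β*)^{2k}. -/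
open Finset

open scoped Matrix

/-- Iterating a symmetric operator contracts a vector by the largest modulus among the eigenvalues
whose eigenvectors are not all orthogonal to it. -/
theorem LinearMap.IsSymmetric.norm_pow_apply_sq_le {E : Type*} [NormedAddCommGroup E]
    [InnerProductSpace ℝ E] [FiniteDimensional ℝ E] {T : E →ₗ[ℝ] E} (hT : T.IsSymmetric)
    {w : E} {β : ℝ} (h : ∀ (μ : ℝ) (v : E), T v = μ • v → |μ| ≤ β ∨ inner ℝ v w = 0) (k : ℕ) :
    ‖(T ^ k) w‖ ^ 2 ≤ β ^ (2 * k) * ‖w‖ ^ 2 := by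
  set b := hT.eigenvectorBasis rfl
  have hb (i) : T (b i) = hT.eigenvalues rfl i • b i := hT.apply_eigenvectorBasis rfl i
  have hpow (i) : inner ℝ (b i) ((T ^ k) w) = hT.eigenvalues rfl i ^ k * inner ℝ (b i) w := by
    induction k with
    | zero => simp
    | succ k ih =>
      rw [pow_succ', Module.End.mul_apply, ← hT, hb, real_inner_smul_left, ih]
      ring
  rw [← b.sum_sq_norm_inner_right, ← b.sum_sq_norm_inner_right, Finset.mul_sum]
  refine Finset.sum_le_sum fun i _ => ?_
  rw [hpow, norm_mul, mul_pow, norm_pow, Real.norm_eq_abs, ← pow_mul, mul_comm k 2]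
  rcases h _ _ (hb i) with h | h
  · gcongr
  · simp [h]

section

variable {χ : Type*}

theorem Matrix.pow_mulVec_eq_self [Fintype χ] [DecidableEq χ] {A : Matrix χ χ ℝ} {f : χ → ℝ} (h : A *ᵥ f = f)
    (k : ℕ) : A ^ k *ᵥ f = f := by
  induction k with
  | zero => simp
  | succ k ih => rw [pow_succ, ← Matrix.mulVec_mulVec, h, ih]

/-- A harmonic function of a primitive stochastic matrix is constant. -/
theorem Matrix.eq_of_mulVec_eq_self_of_pow_pos [Fintype χ] [DecidableEq χ] {A : Matrix χ χ ℝ}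
    (hone : A *ᵥ 1 = 1) {k : ℕ} (hk : ∀ x y, 0 < (A ^ k) x y) {f : χ → ℝ} (hf : A *ᵥ f = f)
    (x y : χ) : f x = f y := by
  have : Nonempty χ := ⟨x⟩
  obtain ⟨m, hm⟩ := Finite.exists_max f
  have h0 : ∑ z, (A ^ k) m z * (f m - f z) = 0 := by
    have h1 := congrFun (pow_mulVec_eq_self hone k) m
    have h2 := congrFun (pow_mulVec_eq_self hf k) m
    simp only [Matrix.mulVec, dotProduct, Pi.one_apply, mul_one] at h1 h2
    simp only [mul_sub, Finset.sum_sub_distrib, ← Finset.sum_mul, h1, h2, one_mul, sub_self]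
  rw [Finset.sum_eq_zero_iff_of_nonneg
    fun z _ => mul_nonneg (hk m z).le (sub_nonneg.2 (hm z))] at h0
  have hmax (z) : f m = f z := by
    have := (mul_eq_zero.1 (h0 z (Finset.mem_univ z))).resolve_left (hk m z).ne'
    linarith
  rw [← hmax x, ← hmax y]

/-- The conjugate of a matrix by the diagonal matrix with entries `g`. -/
noncomputable def Matrix.diagonalConj (g : χ → ℝ) (P : Matrix χ χ ℝ) : Matrix χ χ ℝ :=
  Matrix.of fun x y => g x * P x y / g y

theorem Matrix.diagonalConj_pow [Fintype χ] [DecidableEq χ] {g : χ → ℝ} (hg : ∀ x, g x ≠ 0)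
    (P : Matrix χ χ ℝ) (k : ℕ) :
    diagonalConj g P ^ k = diagonalConj g (P ^ k) := by
  induction k with
  | zero =>
    ext x y
    rcases eq_or_ne x y with rfl | h
    · simp [diagonalConj, hg]
    · simp [diagonalConj, h]
  | succ k ih =>
    rw [pow_succ, ih]
    ext x y
    simp only [pow_succ, diagonalConj, Matrix.mul_apply, Matrix.of_apply, Finset.mul_sum,
      Finset.sum_div]
    refine Finset.sum_congr rfl fun z _ => ?_
    have := hg z
    field_simp

theorem Matrix.diagonalConj_mulVec [Fintype χ] {g : χ → ℝ} (P : Matrix χ χ ℝ) (v : χ → ℝ)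
    (x : χ) : (diagonalConj g P *ᵥ v) x = g x * (P *ᵥ fun y => v y / g y) x := by
  simp only [diagonalConj, Matrix.mulVec, dotProduct, Matrix.of_apply, Finset.mul_sum]
  exact Finset.sum_congr rfl fun z _ => by ring

theorem Matrix.diagonalConj_isHermitian {g : χ → ℝ} (hg : ∀ x, g x ≠ 0) {P : Matrix χ χ ℝ}
    (hrev : ∀ x y, g x ^ 2 * P x y = g y ^ 2 * P y x) : (diagonalConj g P).IsHermitian := by
  ext x y
  have hx := hg x
  have hy := hg y
  simp only [diagonalConj, Matrix.conjTranspose_apply, Matrix.of_apply, star_trivial]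
  field_simp
  exact hrev y x

/-- The total variation distance is controlled by the `χ²` distance. -/
theorem sq_sum_abs_sub_le [Fintype χ] {π : χ → ℝ} (hπpos : ∀ x, 0 < π x) (hπsum : ∑ x, π x = 1)
    (p : χ → ℝ) :
    (∑ y, |p y - π y|) ^ 2 ≤ ∑ y, (p y - π y) ^ 2 / π y := by
  have := Finset.sum_sq_le_sum_mul_sum_of_sq_le_mul Finset.univ (r := fun y => |p y - π y|)
    (f := π) (g := fun y => (p y - π y) ^ 2 / π y) (fun y _ => (hπpos y).le)
    (fun y _ => div_nonneg (sq_nonneg _) (hπpos y).le)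
    (fun y _ => by rw [sq_abs, mul_div_cancel₀ _ (hπpos y).ne'])
  rwa [hπsum, one_mul] at this

/-- The eigenvalues of a matrix other than `1` are bounded by the supremum of their moduli. -/
theorem Matrix.abs_le_sSup_abs_eigenvalue [Fintype χ] [DecidableEq χ] {A : Matrix χ χ ℝ} {μ : ℝ}
    (hμ : Module.End.HasEigenvalue (Matrix.toLin' A) μ) (h1 : μ ≠ 1) :
    |μ| ≤ sSup {r : ℝ | ∃ μ : ℝ,
      Module.End.HasEigenvalue (Matrix.toLin' A) μ ∧ μ ≠ 1 ∧ r = |μ|} := by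
  refine le_csSup (Set.Finite.bddAbove ?_) ⟨μ, hμ, h1, rfl⟩
  refine ((Module.End.finite_hasEigenvalue (Matrix.toLin' A)).image (|·|)).subset ?_
  rintro _ ⟨ν, hν, -, rfl⟩
  exact ⟨ν, hν, rfl⟩

end

open Finset

/-- Diaconis–Stroock total-variation convergence bound: for a reversible, irreducible
and aperiodic Markov kernel `P` on a finite state space with stationary distribution
`π` of full support, letting `β*` be the maximum of the absolute values of the
eigenvalues of `P` other than `1`, one has for all states `x` and all `k`:
`(∑_y |P^k(x,y) - π(y)|)² ≤ ((1-π(x))/π(x)) (β*)^{2k}`. -/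
theorem diaconis_stroock_convergence_bound
    {χ : Type*} [Fintype χ] [DecidableEq χ] [Nonempty χ]
    (P : χ → χ → ℝ) (π : χ → ℝ)
    (hPnonneg : ∀ x y, 0 ≤ P x y)
    (hProw : ∀ x, ∑ y, P x y = 1)
    (hπpos : ∀ x, 0 < π x)
    (hπsum : ∑ x, π x = 1)
    (hrev : ∀ x y, π x * P x y = π y * P y x)
    (hprim : ∃ k : ℕ, ∀ x y : χ, 0 < ((Matrix.of P) ^ k) x y)
    (βstar : ℝ)
    (hβstar : βstar = sSup {r : ℝ | ∃ μ : ℝ,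
      Module.End.HasEigenvalue (Matrix.toLin' (Matrix.of P)) μ ∧ μ ≠ 1 ∧ r = |μ|}) :
    ∀ (x : χ) (k : ℕ),
      (∑ y : χ, |((Matrix.of P) ^ k) x y - π y|) ^ 2
        ≤ (1 - π x) / π x * βstar ^ (2 * k) := by
  intro x k
  obtain ⟨m, hm⟩ := hprim
  set g : χ → ℝ := fun x => √(π x)
  have hg (x) : g x ≠ 0 := (Real.sqrt_pos.2 (hπpos x)).ne'
  have hgsq (x) : g x ^ 2 = π x := Real.sq_sqrt (hπpos x).le
  have hone : Matrix.of P *ᵥ 1 = 1 := by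
    ext z
    simpa [Matrix.mulVec, dotProduct] using hProw z
  set A := Matrix.diagonalConj g (Matrix.of P) with hA
  have hAherm : A.IsHermitian := Matrix.diagonalConj_isHermitian hg (by simpa [hgsq] using hrev)
  have hAg : A *ᵥ g = g := by
    ext z
    rw [Matrix.diagonalConj_mulVec, show (fun y => g y / g y) = 1 from funext fun y =>
      div_self (hg y), hone, Pi.one_apply, mul_one]
  have hgg : ∑ y, g y * g y = 1 := by simpa only [← sq, hgsq] using hπsum
  set w : χ → ℝ := Pi.single x 1 - g x • g with hw
  have hgw : g ⬝ᵥ w = 0 := by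
    have h : g ⬝ᵥ g = 1 := hgg
    rw [hw, dotProduct_sub, dotProduct_smul, h]
    simp
  have hww : ∑ y, w y ^ 2 = 1 - π x := by
    have : w ⬝ᵥ w = 1 - π x := by
      nth_rw 1 [hw]
      rw [sub_dotProduct, smul_dotProduct, hgw, single_dotProduct]
      simp [hw, ← hgsq, sq]
    simpa [dotProduct, sq] using this
  have hT : (Matrix.toEuclideanLin A).IsSymmetric :=
    Matrix.isSymmetric_toEuclideanLin_iff.2 hAherm
  have hcontr := hT.norm_pow_apply_sq_le (w := WithLp.toLp 2 w) (β := βstar) (k := k) (by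
    intro μ v hv
    have hv' (z) : (A *ᵥ v.ofLp) z = μ * v z := by
      simpa using congrArg (fun u : EuclideanSpace ℝ χ => u z) hv
    have hf : Matrix.of P *ᵥ (fun y => v y / g y) = μ • fun y => v y / g y := by
      ext z
      have := hv' z
      rw [Matrix.diagonalConj_mulVec] at this
      rw [Pi.smul_apply, smul_eq_mul, ← mul_div_assoc, eq_div_iff (hg z), ← this, mul_comm]
    by_cases hμ : μ = 1
    · right
      rw [hμ, one_smul] at hf
      have hvg (z) : v z = v x / g x * g z := by
        rw [← div_eq_iff (hg z)]
        exact Matrix.eq_of_mulVec_eq_self_of_pow_pos hone hm hf z x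
      have : v.ofLp = (v x / g x) • g := funext hvg
      rw [EuclideanSpace.inner_eq_star_dotProduct, this]
      simp [dotProduct_comm w, hgw]
    by_cases h0 : v = 0
    · simp [h0]
    left
    rw [hβstar]
    refine Matrix.abs_le_sSup_abs_eigenvalue (Module.End.hasEigenvalue_of_hasEigenvector
      (x := fun y => v y / g y) ⟨Module.End.mem_eigenspace_iff.2 hf, fun h => h0 ?_⟩) hμ
    ext z
    simpa [hg] using congrFun h z)
  have hentry (y) : (A ^ k *ᵥ w) y ^ 2 =
      π x * (((Matrix.of P ^ k) x y - π y) ^ 2 / π y) := by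
    have h : (A ^ k *ᵥ w) y = g x * (Matrix.of P ^ k) x y / g y - g x * g y := by
      rw [hw, Matrix.mulVec_sub, Matrix.mulVec_smul, Matrix.pow_mulVec_eq_self hAg,
        Matrix.mulVec_single_one, Pi.sub_apply, Matrix.col_apply, ← (hAherm.pow k).apply, hA,
        Matrix.diagonalConj_pow hg]
      rfl
    have := hg y
    rw [h, ← hgsq x, ← hgsq y]
    field_simp
  rw [← Matrix.toLpLin_pow, Matrix.toLpLin_toLp, EuclideanSpace.real_norm_sq_eq,
    EuclideanSpace.real_norm_sq_eq] at hcontr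
  simp only [Matrix.toLin'_apply, hentry, hww, ← Finset.mul_sum] at hcontr
  refine (sq_sum_abs_sub_le hπpos hπsum _).trans ?_
  rw [div_mul_eq_mul_div, le_div_iff₀ (hπpos x)]
  linarith
end
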